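/- Let $\{z_k\}$ be a separated sequence in $\mathbb{B}_n$ (i.e., there exists $\delta > 0$ with $\beta(z_i, z_j) > \delta$ for $i \ne j$, where $\beta$ is the Bergman metric), and let $n < t < s$. Then there is a constant $C > 0$ such that for all $z \in \mathbb{B}_n$, $\sum_{k=1}^\infty \frac{(1-|z_k|^2)^t}{|1 - \langle z, z_k\rangle|^s} \le C (1-|z|^2)^{t-s}$. -/

import Mathlib

open MeasureTheory

noncomputable section

abbrev Cn (n : ℕ) := EuclideanSpace ℂ (Fin n)


noncomputable instance (n : ℕ) : MeasurableSpace (Cn n) := borel _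
instance (n : ℕ) : BorelSpace (Cn n) := ⟨rfl⟩
noncomputable instance (n : ℕ) : MeasureSpace (Cn n) := ⟨MeasureTheory.Measure.addHaar⟩

def B (n : ℕ) : Set (Cn n) := Metric.ball 0 1

def bdot {n : ℕ} (z w : Cn n) : ℂ := ∑ j, z j * (starRingEnd ℂ) (w j)

def vol (n : ℕ) (α : ℝ) : Measure (Cn n) :=
  (volume.restrict (B n)).withDensity fun z => ENNReal.ofReal ((1 - ‖z‖ ^ 2) ^ α)

def Hol {n : ℕ} (f : Cn n → ℂ) : Prop := DifferentiableOn ℂ f (B n)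

def bNorm (n : ℕ) (p α : ℝ) (f : Cn n → ℂ) : ℝ :=
  (∫ z, ‖f z‖ ^ p ∂(vol n α)) ^ (1 / p)

def InBergman (n : ℕ) (p α : ℝ) (f : Cn n → ℂ) : Prop :=
  Hol f ∧ Integrable (fun z => ‖f z‖ ^ p) (vol n α)

def rderiv {n : ℕ} (f : Cn n → ℂ) (z : Cn n) : ℂ := fderiv ℂ f z z

def mob {n : ℕ} (a z : Cn n) : ℝ :=
  (1 - ‖a‖ ^ 2) * (1 - ‖z‖ ^ 2) / ‖(1 : ℂ) - bdot z a‖ ^ 2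

def rho {n : ℕ} (z w : Cn n) : ℝ := Real.sqrt (1 - mob z w)

def bergDist {n : ℕ} (z w : Cn n) : ℝ :=
  (1 / 2) * Real.log ((1 + rho z w) / (1 - rho z w))

def bergBall {n : ℕ} (a : Cn n) (r : ℝ) : Set (Cn n) := {w ∈ B n | bergDist a w < r}

def IsCarleson (n : ℕ) (lam γ : ℝ) (μ : Measure (Cn n)) : Prop :=
  ∀ p q : ℝ, 0 < p → 0 < q → q / p = lam →
    ∃ C > 0, ∀ f : Cn n → ℂ, InBergman n p γ f →
      ∫ z, ‖f z‖ ^ q ∂μ ≤ C * bNorm n p γ f ^ q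

def blochSet (n : ℕ) (α : ℝ) (f : Cn n → ℂ) : Set ℝ :=
  {x | ∃ z ∈ B n, x = ‖rderiv f z‖ * (1 - ‖z‖ ^ 2) ^ α}

def blochNorm (n : ℕ) (α : ℝ) (f : Cn n → ℂ) : ℝ := sSup (blochSet n α f)

def InBloch (n : ℕ) (α : ℝ) (f : Cn n → ℂ) : Prop :=
  Hol f ∧ BddAbove (blochSet n α f)

def Fint (n : ℕ) (p q s : ℝ) (f : Cn n → ℂ) (a : Cn n) : ℝ :=
  ∫ z in B n, ‖rderiv f z‖ ^ p * (1 - ‖z‖ ^ 2) ^ q * mob a z ^ s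

def FSet (n : ℕ) (p q s : ℝ) (f : Cn n → ℂ) : Set ℝ :=
  {x | ∃ a ∈ B n, x = Fint n p q s f a}

def FNorm (n : ℕ) (p q s : ℝ) (f : Cn n → ℂ) : ℝ := sSup (FSet n p q s f) ^ (1 / p)

def InF (n : ℕ) (p q s : ℝ) (f : Cn n → ℂ) : Prop :=
  Hol f ∧ BddAbove (FSet n p q s f)

def toeplitz (n : ℕ) (β : ℝ) (μ : Measure (Cn n)) (f : Cn n → ℂ) (z : Cn n) : ℂ :=
  ∫ w, f w / ((1 : ℂ) - bdot z w) ^ ((((n : ℝ) + 1 + β : ℝ)) : ℂ) ∂μ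

def carlSet (n : ℕ) (p q γ : ℝ) (μ : Measure (Cn n)) : Set ℝ :=
  {x | ∃ f : Cn n → ℂ, InBergman n p γ f ∧ bNorm n p γ f ≤ 1 ∧ x = ∫ z, ‖f z‖ ^ q ∂μ}

theorem norm_one_sub_inner_sq {E : Type*} [NormedAddCommGroup E] [InnerProductSpace ℂ E]
    (w v : E) :
    ‖1 - inner ℂ w v‖ ^ 2 =
      (((1 - ‖w‖ ^ 2) + (1 - ‖v‖ ^ 2) + ‖w - v‖ ^ 2) / 2) ^ 2 + (inner ℂ w v).im ^ 2 := by
  have h := norm_sub_sq (𝕜 := ℂ) w v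
  simp only [RCLike.re_to_complex] at h
  rw [← Complex.normSq_eq_norm_sq, Complex.normSq_apply, h]
  simp
  ring

theorem norm_one_sub_inner_sq_lt_of_close {E : Type*} [NormedAddCommGroup E]
    [InnerProductSpace ℂ E] {w v : E} {c h ε : ℝ} (hh : 0 < h) (hc : 0 < c) (hc1 : c ≤ 1)
    (hcε : 20 * c ≤ ε)
    (hw : h / 2 < 1 - ‖w‖ ^ 2) (hw' : 1 - ‖w‖ ^ 2 ≤ h)
    (hv : h / 2 < 1 - ‖v‖ ^ 2) (hv' : 1 - ‖v‖ ^ 2 ≤ h)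
    (hnorm : |(1 - ‖w‖ ^ 2) - (1 - ‖v‖ ^ 2)| ≤ c * h)
    (hdist : ‖w - v‖ ^ 2 ≤ c * h) (him : |(inner ℂ w v).im| ≤ c * h) :
    ‖1 - inner ℂ w v‖ ^ 2 < (1 + ε) * ((1 - ‖w‖ ^ 2) * (1 - ‖v‖ ^ 2)) := by
  rw [norm_one_sub_inner_sq]
  generalize 1 - ‖w‖ ^ 2 = A at *
  generalize 1 - ‖v‖ ^ 2 = B at *
  have hd0 : 0 ≤ ‖w - v‖ ^ 2 := by positivity
  generalize ‖w - v‖ ^ 2 = d at *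
  generalize (inner ℂ w v).im = y at *
  have h1 : y ^ 2 ≤ (c * h) ^ 2 := sq_le_sq' (abs_le.1 him).1 (abs_le.1 him).2
  have h2 : (A - B) ^ 2 ≤ (c * h) ^ 2 := sq_le_sq' (abs_le.1 hnorm).1 (abs_le.1 hnorm).2
  have h3 : d ^ 2 ≤ (c * h) ^ 2 := by gcongr
  have h4 : (c * h) ^ 2 ≤ c * h ^ 2 := by nlinarith [mul_pos hc (pow_pos hh 2)]
  have h5 : (A + B) * d ≤ (2 * h) * (c * h) := by
    apply mul_le_mul _ hdist hd0 (by positivity)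
    linarith
  have h6 : h / 2 * (h / 2) < A * B := by
    apply mul_lt_mul'' hw hv <;> positivity
  have h7 : 20 * c * (A * B) ≤ ε * (A * B) := by
    apply mul_le_mul_of_nonneg_right hcε
    nlinarith
  nlinarith [mul_pos hc (sub_pos.2 h6), mul_pos hc (pow_pos hh 2)]

theorem im_inner_eq_add_sub {E : Type*} [NormedAddCommGroup E] [InnerProductSpace ℂ E]
    (w v c : E) :
    (inner ℂ w v).im =
      (inner ℂ (w - c) (v - c)).im + ((inner ℂ c v).im - (inner ℂ c w).im) := by
  have h1 : (inner ℂ c c).im = 0 := inner_self_im (𝕜 := ℂ) c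
  have h2 : (inner ℂ c w).im = - (inner ℂ w c).im := inner_im_symm (𝕜 := ℂ) c w
  simp only [inner_sub_left, inner_sub_right, Complex.sub_im, h1, h2]
  ring

theorem sum_le_of_fiber_le_geometric {ι : Type*} (F : Finset ι) (f : ι → ℝ) (j : ι → ℕ)
    {K q : ℝ} (hK : 0 ≤ K) (hq0 : 0 ≤ q) (hq1 : q < 1)
    (hf : ∀ m, ∑ k ∈ F with j k = m, f k ≤ K * q ^ m) :
    ∑ k ∈ F, f k ≤ K * (1 - q)⁻¹ := by
  classical
  rw [← Finset.sum_fiberwise_of_maps_to (g := j) (t := F.image j)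
    (fun k hk => Finset.mem_image_of_mem j hk)]
  calc _ ≤ ∑ m ∈ F.image j, K * q ^ m := Finset.sum_le_sum fun m _ => hf m
    _ = K * ∑ m ∈ F.image j, q ^ m := by rw [Finset.mul_sum]
    _ ≤ K * (1 - q)⁻¹ := by
      gcongr
      rw [← tsum_geometric_of_lt_one hq0 hq1]
      exact (summable_geometric_of_lt_one hq0 hq1).sum_le_tsum _ fun m _ => by positivity

/-- Involutive automorphism of the unit ball interchanging `0` and `a`. -/
noncomputable def ballInvolution {E : Type*} [NormedAddCommGroup E] [InnerProductSpace ℂ E]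
    (a z : E) : E :=
  (1 - inner ℂ a z)⁻¹ •
    ((1 - inner ℂ a z / (1 + (√(1 - ‖a‖ ^ 2) : ℂ))) • a - (√(1 - ‖a‖ ^ 2) : ℂ) • z)

theorem one_sub_inner_ne_zero {E : Type*} [NormedAddCommGroup E] [InnerProductSpace ℂ E]
    {a z : E} (ha : ‖a‖ < 1) (hz : ‖z‖ < 1) : 1 - inner ℂ a z ≠ 0 := by
  intro h
  have h1 : ‖inner ℂ a z‖ = 1 := by rw [← sub_eq_zero.1 h, norm_one]
  have h2 := norm_inner_le_norm (𝕜 := ℂ) a z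
  nlinarith [norm_nonneg a, norm_nonneg z]

theorem one_sub_inner_ballInvolution {E : Type*} [NormedAddCommGroup E] [InnerProductSpace ℂ E]
    {a z w : E} (ha : ‖a‖ < 1) (hz : ‖z‖ < 1) (hw : ‖w‖ < 1) :
    1 - inner ℂ (ballInvolution a z) (ballInvolution a w) =
      ((1 - ‖a‖ ^ 2 : ℝ) : ℂ) * (1 - inner ℂ z w) /
        ((1 - inner ℂ z a) * (1 - inner ℂ a w)) := by
  have hx := one_sub_inner_ne_zero hz ha
  have hy := one_sub_inner_ne_zero ha hw
  have hpos : 0 ≤ 1 - ‖a‖ ^ 2 := by nlinarith [norm_nonneg a]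
  have hs : ((√(1 - ‖a‖ ^ 2) : ℝ) : ℂ) ^ 2 = 1 - (‖a‖ : ℂ) ^ 2 := by
    exact_mod_cast congrArg (fun x : ℝ => (x : ℂ)) (Real.sq_sqrt hpos)
  have h1s : (1 + ((√(1 - ‖a‖ ^ 2) : ℝ) : ℂ)) ≠ 0 := by
    have : 0 < 1 + √(1 - ‖a‖ ^ 2) := by positivity
    exact_mod_cast this.ne'
  have haa : inner ℂ a a = (‖a‖ : ℂ) ^ 2 := inner_self_eq_norm_sq_to_K a
  simp only [ballInvolution, inner_smul_left, inner_smul_right, inner_sub_left, inner_sub_right,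
    map_inv₀, map_sub, map_one, map_div₀, map_add, Complex.conj_ofReal, inner_conj_symm, haa]
  push_cast
  generalize ((√(1 - ‖a‖ ^ 2) : ℝ) : ℂ) = s at *
  have hA : (‖a‖ : ℂ) ^ 2 = 1 - s ^ 2 := by rw [hs]; ring
  rw [hA]
  field_simp
  ring

theorem card_le_of_close_of_separated {ι E : Type*} [NormedAddCommGroup E]
    [InnerProductSpace ℂ E] {F : Finset ι} {w : ι → E} {c h ε : ℝ} (hh : 0 < h) (hh1 : h ≤ 1)
    (hc : 0 < c) (hc1 : c ≤ 1) (hcε : 20 * c ≤ ε)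
    (hw : ∀ i ∈ F, h / 2 < 1 - ‖w i‖ ^ 2) (hw' : ∀ i ∈ F, 1 - ‖w i‖ ^ 2 ≤ h)
    (hdist : ∀ i ∈ F, ∀ j ∈ F, ‖w i - w j‖ ^ 2 ≤ c / 2 * h)
    (hsep : ∀ i ∈ F, ∀ j ∈ F, i ≠ j →
      (1 + ε) * ((1 - ‖w i‖ ^ 2) * (1 - ‖w j‖ ^ 2)) ≤ ‖1 - inner ℂ (w i) (w j)‖ ^ 2) :
    (F.card : ℝ) ≤ 18 / c ^ 2 / √h := by
  rcases F.eq_empty_or_nonempty with rfl | ⟨k, hk⟩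
  · simp only [Finset.card_empty, Nat.cast_zero]
    positivity
  have hp : 0 < √h := Real.sqrt_pos.2 hh
  have hp1 : √h ≤ 1 := Real.sqrt_le_one.2 hh1
  have hpp : √h ^ 2 = h := Real.sq_sqrt hh.le
  have hη : 0 < c / 2 * h := by positivity
  set X : ℝ := 2 / (c * √h) with hX
  have hX2 : 2 ≤ X := by
    rw [hX, le_div_iff₀ (by positivity)]
    nlinarith
  have hXη : X * (c / 2 * h) = √h := by
    rw [hX]; field_simp; rw [hpp]
  have him : ∀ i ∈ F, |(inner ℂ (w k) (w i)).im| ≤ X * (c / 2 * h) := by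
    intro i hi
    have h0 : (inner ℂ (w k) (w k)).im = 0 := inner_self_im (𝕜 := ℂ) (w k)
    have h1 : (inner ℂ (w k) (w i)).im = (inner ℂ (w k) (w i - w k)).im := by
      rw [inner_sub_right, Complex.sub_im, h0, sub_zero]
    have h2 : ‖w k‖ ≤ 1 := by
      have := hw k hk
      nlinarith [norm_nonneg (w k)]
    have h3 : ‖w i - w k‖ ≤ √h := by
      apply Real.le_sqrt_of_sq_le
      have := hdist i hi k hk
      nlinarith
    rw [h1, hXη]
    calc _ ≤ ‖inner ℂ (w k) (w i - w k)‖ := Complex.abs_im_le_norm _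
      _ ≤ ‖w k‖ * ‖w i - w k‖ := norm_inner_le_norm _ _
      _ ≤ 1 * √h := by gcongr
      _ = √h := one_mul _
  let g : ι → ℤ × ℤ := fun i =>
    (⌊(inner ℂ (w k) (w i)).im / (c / 2 * h)⌋, ⌊(1 - ‖w i‖ ^ 2) / (c / 2 * h)⌋)
  have hinj : Set.InjOn g F := by
    intro i hi j hj hij
    by_contra hne
    have hi' : i ∈ F := hi
    have hj' : j ∈ F := hj
    obtain ⟨e1, e2⟩ := Prod.ext_iff.1 hij
    have e1 := Int.abs_sub_lt_one_of_floor_eq_floor e1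
    have e2 := Int.abs_sub_lt_one_of_floor_eq_floor e2
    rw [← sub_div, abs_div, abs_of_pos hη, div_lt_one hη] at e1 e2
    refine (norm_one_sub_inner_sq_lt_of_close hh hc hc1 hcε (hw i hi') (hw' i hi') (hw j hj')
      (hw' j hj') ?_ ?_ ?_).not_ge (hsep i hi' j hj' hne)
    · nlinarith
    · nlinarith [hdist i hi' j hj']
    · rw [im_inner_eq_add_sub (w i) (w j) (w k)]
      have h1 : |(inner ℂ (w i - w k) (w j - w k)).im| ≤ c / 2 * h := by
        refine (Complex.abs_im_le_norm _).trans ((norm_inner_le_norm _ _).trans ?_)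
        nlinarith [hdist i hi' k hk, hdist j hj' k hk, sq_nonneg (‖w i - w k‖ - ‖w j - w k‖)]
      rw [abs_sub_comm] at e1
      calc _ ≤ _ := abs_add_le _ _
        _ ≤ c / 2 * h + c / 2 * h := add_le_add h1 e1.le
        _ = c * h := by ring
  have hmaps : Set.MapsTo g F (Finset.Icc ⌊-X⌋ ⌊X⌋ ×ˢ Finset.Icc 0 ⌊2 / c⌋ : Finset (ℤ × ℤ)) := by
    intro i hi
    have hi' : i ∈ F := hi
    obtain ⟨h1, h2⟩ := abs_le.1 (him i hi')
    simp only [Finset.coe_product, Finset.coe_Icc, Set.mem_prod, Set.mem_Icc, g]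
    refine ⟨⟨Int.floor_le_floor ?_, Int.floor_le_floor ?_⟩, Int.floor_nonneg.2 ?_,
      Int.floor_le_floor ?_⟩
    · rw [le_div_iff₀ hη]; linarith
    · rw [div_le_iff₀ hη]; linarith
    · have := hw i hi'
      apply div_nonneg _ hη.le
      linarith
    · rw [div_le_iff₀ hη]
      have : 2 / c * (c / 2 * h) = h := by field_simp
      rw [this]
      exact hw' i hi'
  have hcard := Finset.card_le_card_of_injOn g hmaps hinj
  rw [Finset.card_product, Int.card_Icc, Int.card_Icc] at hcard
  have h1 : (((⌊X⌋ + 1 - ⌊-X⌋).toNat : ℕ) : ℝ) ≤ 3 * X := by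
    have h0 : (0 : ℤ) ≤ ⌊X⌋ + 1 - ⌊-X⌋ := by
      have : ⌊-X⌋ ≤ ⌊X⌋ := Int.floor_le_floor (by linarith)
      omega
    have h2 : (((⌊X⌋ + 1 - ⌊-X⌋).toNat : ℤ) : ℝ) = ((⌊X⌋ + 1 - ⌊-X⌋ : ℤ) : ℝ) := by
      rw [Int.toNat_of_nonneg h0]
    rw [Int.cast_natCast] at h2
    rw [h2]
    push_cast
    linarith [Int.floor_le X, Int.lt_floor_add_one (-X)]
  have h2 : (((⌊2 / c⌋ + 1 - 0).toNat : ℕ) : ℝ) ≤ 3 / c := by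
    have h0 : (0 : ℤ) ≤ ⌊2 / c⌋ + 1 - 0 := by
      have : 0 ≤ ⌊2 / c⌋ := Int.floor_nonneg.2 (by positivity)
      omega
    have h2 : (((⌊2 / c⌋ + 1 - 0).toNat : ℤ) : ℝ) = ((⌊2 / c⌋ + 1 - 0 : ℤ) : ℝ) := by
      rw [Int.toNat_of_nonneg h0]
    rw [Int.cast_natCast] at h2
    rw [h2]
    push_cast
    have h3 : 1 ≤ 1 / c := by rw [le_div_iff₀ hc]; linarith
    have h4 : 3 / c = 2 / c + 1 / c := by ring
    linarith [Int.floor_le (2 / c)]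
  calc (F.card : ℝ) ≤ _ := by exact_mod_cast hcard
    _ = _ := Nat.cast_mul _ _
    _ ≤ (3 * X) * (3 / c) := by gcongr
    _ = 18 / c ^ 2 / √h := by rw [hX]; field_simp; norm_num

open MeasureTheory in
theorem card_mul_pow_le_of_ball_multiplicity {ι E : Type*} [NormedAddCommGroup E]
    [NormedSpace ℝ E] [FiniteDimensional ℝ E] [Nontrivial E] (F : Finset ι) (w : ι → E)
    {a b r M : ℝ} (ha : 0 ≤ a) (hab : a ≤ b) (hr : 0 ≤ r) (hM : 0 ≤ M)
    (hsub : ∀ i ∈ F, Metric.ball (w i) r ⊆ Metric.ball 0 b \ Metric.ball 0 a)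
    (hmul : ∀ x, (({i ∈ F | dist x (w i) < r} : Finset ι).card : ℝ) ≤ M) :
    F.card * r ^ Module.finrank ℝ E ≤
      M * (b ^ Module.finrank ℝ E - a ^ Module.finrank ℝ E) := by
  let _ : MeasurableSpace E := borel E
  have _ : BorelSpace E := ⟨rfl⟩
  let μ : Measure E := Measure.addHaar
  have hball : ∀ (x : E) {ρ : ℝ}, 0 ≤ ρ →
      μ.real (Metric.ball x ρ) = ρ ^ Module.finrank ℝ E * μ.real (Metric.ball 0 1) := by
    intro x ρ hρ
    rw [measureReal_def, Measure.addHaar_ball μ x hρ, ENNReal.toReal_mul,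
      ENNReal.toReal_ofReal (by positivity), measureReal_def]
  have hpos : 0 < μ.real (Metric.ball (0 : E) 1) :=
    ENNReal.toReal_pos (Metric.measure_ball_pos μ 0 one_pos).ne' measure_ball_lt_top.ne
  have key : ∑ i ∈ F, μ (Metric.ball (w i) r) ≤
      ENNReal.ofReal M * μ (Metric.ball 0 b \ Metric.ball 0 a) := by
    calc ∑ i ∈ F, μ (Metric.ball (w i) r)
        = ∫⁻ x, ∑ i ∈ F, (Metric.ball (w i) r).indicator 1 x ∂μ := by
          rw [lintegral_finsetSum _ fun i _ => measurable_one.indicator measurableSet_ball]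
          simp [lintegral_indicator_one measurableSet_ball]
      _ ≤ ∫⁻ x, (Metric.ball 0 b \ Metric.ball 0 a).indicator
            (fun _ => ENNReal.ofReal M) x ∂μ := by
          refine lintegral_mono fun x => ?_
          by_cases hx : x ∈ Metric.ball (0 : E) b \ Metric.ball 0 a
          · rw [Set.indicator_of_mem hx]
            have : ∑ i ∈ F, (Metric.ball (w i) r).indicator (1 : E → ENNReal) x =
                (({i ∈ F | dist x (w i) < r} : Finset ι).card : ENNReal) := by
              rw [Finset.card_filter, Nat.cast_sum]
              refine Finset.sum_congr rfl fun i _ => ?_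
              by_cases hi : dist x (w i) < r <;> simp [hi]
            rw [this, ← ENNReal.ofReal_natCast]
            exact ENNReal.ofReal_le_ofReal (hmul x)
          · rw [Set.indicator_of_notMem hx]
            refine (Finset.sum_eq_zero fun i hi => ?_).le
            exact Set.indicator_of_notMem (fun h => hx (hsub i hi h)) _
      _ = _ := lintegral_indicator_const (measurableSet_ball.diff measurableSet_ball) _
  have hfin : μ (Metric.ball (0 : E) b \ Metric.ball 0 a) ≠ ⊤ :=
    ((measure_mono Set.sdiff_subset).trans_lt measure_ball_lt_top).ne
  have key' := ENNReal.toReal_mono (ENNReal.mul_ne_top ENNReal.ofReal_ne_top hfin) key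
  rw [ENNReal.toReal_sum fun i _ => measure_ball_lt_top.ne, ENNReal.toReal_mul,
    ENNReal.toReal_ofReal hM] at key'
  simp only [← measureReal_def] at key'
  rw [measureReal_sdiff (Metric.ball_subset_ball hab) measurableSet_ball
      measure_ball_lt_top.ne,
    hball _ ha, hball _ (ha.trans hab), Finset.sum_congr rfl fun i _ => hball (w i) hr,
    Finset.sum_const, nsmul_eq_mul] at key'
  refine le_of_mul_le_mul_right ?_ hpos
  linarith

theorem exists_card_shell_le {ι : Type*} (E : Type*) [NormedAddCommGroup E]
    [InnerProductSpace ℂ E] [FiniteDimensional ℂ E] [Nontrivial E] {ε : ℝ} (hε : 0 < ε) :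
    ∃ K : ℝ, 0 ≤ K ∧ ∀ (h : ℝ) (F : Finset ι) (w : ι → E), 0 < h → h ≤ 1 →
      (∀ i ∈ F, h / 2 < 1 - ‖w i‖ ^ 2) → (∀ i ∈ F, 1 - ‖w i‖ ^ 2 ≤ h) →
      (∀ i ∈ F, ∀ j ∈ F, i ≠ j →
        (1 + ε) * ((1 - ‖w i‖ ^ 2) * (1 - ‖w j‖ ^ 2)) ≤ ‖1 - inner ℂ (w i) (w j)‖ ^ 2) →
      (F.card : ℝ) ≤ K / h ^ Module.finrank ℂ E := by
  obtain ⟨c, hc, hc1, hcε⟩ : ∃ c : ℝ, 0 < c ∧ c ≤ 1 ∧ 20 * c ≤ ε :=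
    ⟨min 1 (ε / 20), by positivity, min_le_left _ _, by linarith [min_le_right 1 (ε / 20)]⟩
  let _ : NormedSpace ℝ E := NormedSpace.restrictScalars ℝ ℂ E
  have _ : FiniteDimensional ℝ E := FiniteDimensional.complexToReal E
  have hd : Module.finrank ℝ E = 2 * Module.finrank ℂ E := finrank_real_of_complex E
  set m := Module.finrank ℂ E
  refine ⟨18 / c ^ 2 * (3 * (2 * m : ℕ) * 2 ^ (2 * m - 1)) / (c / 4) ^ (2 * m), by positivity,
    fun h F w hh hh1 hw hw' hsep => ?_⟩
  have hp : 0 < √h := Real.sqrt_pos.2 hh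
  have hp1 : √h ≤ 1 := Real.sqrt_le_one.2 hh1
  have hpp : √h ^ 2 = h := Real.sq_sqrt hh.le
  set p := √h
  have hρ : 0 < c / 4 * p := by positivity
  have hρp : c / 4 * p ≤ p := by nlinarith
  set a := max 0 (1 - p - c / 4 * p) with ha
  have ha0 : 0 ≤ a := le_max_left _ _
  have hab : a ≤ 1 + c / 4 * p := max_le (by positivity) (by linarith)
  have hmain := card_mul_pow_le_of_ball_multiplicity F w (a := a) (b := 1 + c / 4 * p)
    (r := c / 4 * p) (M := 18 / c ^ 2 / p) ha0 hab hρ.le (by positivity) ?_ ?_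
  · rw [hd] at hmain
    have hdiff : (1 + c / 4 * p) ^ (2 * m) - a ^ (2 * m) ≤
        3 * p * (2 * m : ℕ) * 2 ^ (2 * m - 1) := by
      refine (le_abs_self _).trans ((abs_pow_sub_pow_le _ _ _).trans ?_)
      rw [abs_of_nonneg (sub_nonneg.2 hab), abs_of_nonneg ha0, abs_of_nonneg (ha0.trans hab),
        max_eq_left hab]
      have h1 : 1 + c / 4 * p - a ≤ 3 * p := by
        have : 1 - p - c / 4 * p ≤ a := le_max_right _ _
        linarith
      have h2 : 1 + c / 4 * p ≤ 2 := by linarith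
      gcongr
    have hpow : (c / 4 * p) ^ (2 * m) = (c / 4) ^ (2 * m) * h ^ m := by
      rw [mul_pow, pow_mul p, hpp]
    rw [hpow] at hmain
    rw [div_div, le_div_iff₀ (by positivity)]
    refine hmain.trans ((mul_le_mul_of_nonneg_left hdiff (by positivity)).trans_eq ?_)
    field_simp
  · intro i hi x hx
    rw [Metric.mem_ball, dist_eq_norm] at hx
    have h1 := norm_sub_norm_le (w i) x
    have h2 := norm_sub_norm_le x (w i)
    rw [norm_sub_rev] at h1
    have h3 : ‖w i‖ ≤ 1 := by nlinarith [hw i hi, norm_nonneg (w i)]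
    have h4 : 1 - p ≤ ‖w i‖ := by
      apply le_of_sq_le_sq _ (norm_nonneg _)
      nlinarith [hw' i hi]
    refine ⟨?_, ?_⟩
    · rw [Metric.mem_ball, dist_zero_right]
      linarith
    · rw [Metric.mem_ball, dist_zero_right, not_lt]
      exact max_le (norm_nonneg _) (by linarith)
  · intro x
    refine card_le_of_close_of_separated (w := w) hh hh1 hc hc1 hcε
      (fun i hi => hw i (Finset.mem_filter.1 hi).1)
      (fun i hi => hw' i (Finset.mem_filter.1 hi).1) (fun i hi j hj => ?_)
      (fun i hi j hj => hsep i (Finset.mem_filter.1 hi).1 j (Finset.mem_filter.1 hj).1)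
    have h1 := (Finset.mem_filter.1 hi).2
    have h2 := (Finset.mem_filter.1 hj).2
    have h3 : ‖w i - w j‖ ≤ 2 * (c / 4 * p) := by
      rw [← dist_eq_norm]
      linarith [dist_triangle_left (w i) (w j) x]
    calc ‖w i - w j‖ ^ 2 ≤ (2 * (c / 4 * p)) ^ 2 := by gcongr
      _ = c ^ 2 / 4 * h := by rw [← hpp]; ring
      _ ≤ c / 2 * h := mul_le_mul_of_nonneg_right (by nlinarith) hh.le

theorem exists_sum_rpow_le {ι : Type*} (E : Type*) [NormedAddCommGroup E]
    [InnerProductSpace ℂ E] [FiniteDimensional ℂ E] [Nontrivial E] {ε t : ℝ} (hε : 0 < ε)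
    (ht : (Module.finrank ℂ E : ℝ) < t) :
    ∃ C : ℝ, 0 ≤ C ∧ ∀ (F : Finset ι) (w : ι → E), (∀ i, ‖w i‖ < 1) →
      (∀ i j, i ≠ j →
        (1 + ε) * ((1 - ‖w i‖ ^ 2) * (1 - ‖w j‖ ^ 2)) ≤ ‖1 - inner ℂ (w i) (w j)‖ ^ 2) →
      ∑ i ∈ F, (1 - ‖w i‖ ^ 2) ^ t ≤ C := by
  obtain ⟨K, hK, hcard⟩ := exists_card_shell_le (ι := ι) E hε
  set m := Module.finrank ℂ E
  have ht0 : 0 < t := lt_of_le_of_lt (Nat.cast_nonneg m) ht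
  have hq1 : (1 / 2 : ℝ) ^ (t - m) < 1 :=
    Real.rpow_lt_one (by norm_num) (by norm_num) (by linarith)
  refine ⟨K * (1 - (1 / 2 : ℝ) ^ (t - m))⁻¹, mul_nonneg hK (inv_nonneg.2 (by linarith)),
    fun F w hw hsep => ?_⟩
  have hA : ∀ i, 0 < 1 - ‖w i‖ ^ 2 := fun i => by nlinarith [hw i, norm_nonneg (w i)]
  have hA1 : ∀ i, 1 ≤ 1 / (1 - ‖w i‖ ^ 2) := fun i => by
    rw [le_div_iff₀ (hA i)]; nlinarith [norm_nonneg (w i)]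
  choose j hj1 hj2 using fun i => exists_nat_pow_near (hA1 i) (one_lt_two)
  refine sum_le_of_fiber_le_geometric F _ j hK (by positivity) hq1 fun l => ?_
  have hh : (0 : ℝ) < (1 / 2) ^ l := by positivity
  have hup : ∀ i ∈ F.filter (fun k => j k = l), 1 - ‖w i‖ ^ 2 ≤ (1 / 2) ^ l := by
    intro i hi
    have h1 := hj1 i
    rw [(Finset.mem_filter.1 hi).2, le_div_iff₀ (hA i)] at h1
    rw [one_div, inv_pow, ← one_div, le_div_iff₀ (by positivity)]
    linarith
  have hlow : ∀ i ∈ F.filter (fun k => j k = l), (1 / 2) ^ l / 2 < 1 - ‖w i‖ ^ 2 := by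
    intro i hi
    have h1 := hj2 i
    rw [(Finset.mem_filter.1 hi).2, div_lt_iff₀ (hA i), pow_succ] at h1
    rw [one_div, inv_pow, ← one_div, div_div, div_lt_iff₀ (by positivity)]
    linarith
  have hc := hcard ((1 / 2) ^ l) _ w hh (pow_le_one₀ (by norm_num) (by norm_num)) hlow hup
    (fun i _ k _ hne => hsep i k hne)
  calc ∑ i ∈ F with j i = l, (1 - ‖w i‖ ^ 2) ^ t
      ≤ ∑ i ∈ F with j i = l, ((1 / 2 : ℝ) ^ l) ^ t :=
        Finset.sum_le_sum fun i hi => Real.rpow_le_rpow (hA i).le (hup i hi) ht0.le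
    _ = (F.filter (fun k => j k = l)).card * ((1 / 2 : ℝ) ^ l) ^ t := by
        rw [Finset.sum_const, nsmul_eq_mul]
    _ ≤ K / ((1 / 2) ^ l) ^ m * ((1 / 2 : ℝ) ^ l) ^ t := by gcongr
    _ = K * ((1 / 2 : ℝ) ^ (t - m)) ^ l := by
        rw [Real.rpow_pow_comm (by norm_num), Real.rpow_sub hh, Real.rpow_natCast]
        ring

theorem one_sub_norm_ballInvolution_sq {E : Type*} [NormedAddCommGroup E]
    [InnerProductSpace ℂ E] {a z : E} (ha : ‖a‖ < 1) (hz : ‖z‖ < 1) :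
    1 - ‖ballInvolution a z‖ ^ 2 =
      (1 - ‖a‖ ^ 2) * (1 - ‖z‖ ^ 2) / ‖1 - inner ℂ a z‖ ^ 2 := by
  have h := one_sub_inner_ballInvolution ha hz hz
  have h1 : 1 - inner ℂ z a = starRingEnd ℂ (1 - inner ℂ a z) := by simp
  have h2 (u : E) : inner ℂ u u = (‖u‖ : ℂ) ^ 2 := inner_self_eq_norm_sq_to_K u
  rw [h1, Complex.conj_mul', h2, h2] at h
  exact_mod_cast h

theorem norm_one_sub_inner_ballInvolution {E : Type*} [NormedAddCommGroup E]
    [InnerProductSpace ℂ E] {a z w : E} (ha : ‖a‖ < 1) (hz : ‖z‖ < 1) (hw : ‖w‖ < 1) :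
    ‖1 - inner ℂ (ballInvolution a z) (ballInvolution a w)‖ =
      (1 - ‖a‖ ^ 2) * ‖1 - inner ℂ z w‖ / (‖1 - inner ℂ a z‖ * ‖1 - inner ℂ a w‖) := by
  have hpos : 0 ≤ 1 - ‖a‖ ^ 2 := by nlinarith [norm_nonneg a]
  have h1 : 1 - inner ℂ z a = starRingEnd ℂ (1 - inner ℂ a z) := by simp
  rw [one_sub_inner_ballInvolution ha hz hw, norm_div, norm_mul, norm_mul, Complex.norm_real,
    Real.norm_of_nonneg hpos, h1, RCLike.norm_conj]

theorem norm_ballInvolution_lt_one {E : Type*} [NormedAddCommGroup E]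
    [InnerProductSpace ℂ E] {a z : E} (ha : ‖a‖ < 1) (hz : ‖z‖ < 1) :
    ‖ballInvolution a z‖ < 1 := by
  have h := one_sub_norm_ballInvolution_sq ha hz
  have h1 : 0 < 1 - ‖a‖ ^ 2 := by nlinarith [norm_nonneg a]
  have h2 : 0 < 1 - ‖z‖ ^ 2 := by nlinarith [norm_nonneg z]
  have h3 : 0 < ‖1 - inner ℂ a z‖ := norm_pos_iff.2 (one_sub_inner_ne_zero ha hz)
  have h4 : 0 < 1 - ‖ballInvolution a z‖ ^ 2 := by rw [h]; positivity
  nlinarith [norm_nonneg (ballInvolution a z)]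

theorem exists_sum_ballInvolution_rpow_le {ι : Type*} (E : Type*) [NormedAddCommGroup E]
    [InnerProductSpace ℂ E] [FiniteDimensional ℂ E] [Nontrivial E] {ε t : ℝ} (hε : 0 < ε)
    (ht : (Module.finrank ℂ E : ℝ) < t) :
    ∃ C : ℝ, 0 ≤ C ∧ ∀ (F : Finset ι) (w : ι → E), (∀ i, ‖w i‖ < 1) →
      (∀ i j, i ≠ j →
        (1 + ε) * ((1 - ‖w i‖ ^ 2) * (1 - ‖w j‖ ^ 2)) ≤ ‖1 - inner ℂ (w i) (w j)‖ ^ 2) →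
      ∀ a : E, ‖a‖ < 1 →
      ∑ i ∈ F, ((1 - ‖a‖ ^ 2) * (1 - ‖w i‖ ^ 2) / ‖1 - inner ℂ a (w i)‖ ^ 2) ^ t ≤ C := by
  obtain ⟨C, hC, hsum⟩ := exists_sum_rpow_le (ι := ι) E hε ht
  refine ⟨C, hC, fun F w hw hsep a ha => ?_⟩
  have h := hsum F (fun i => ballInvolution a (w i))
    (fun i => norm_ballInvolution_lt_one ha (hw i)) fun i j hij => ?_
  · simpa only [one_sub_norm_ballInvolution_sq ha (hw _)] using h
  · have hi : 0 < ‖1 - inner ℂ a (w i)‖ := norm_pos_iff.2 (one_sub_inner_ne_zero ha (hw i))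
    have hj : 0 < ‖1 - inner ℂ a (w j)‖ := norm_pos_iff.2 (one_sub_inner_ne_zero ha (hw j))
    rw [one_sub_norm_ballInvolution_sq ha (hw i), one_sub_norm_ballInvolution_sq ha (hw j),
      norm_one_sub_inner_ballInvolution ha (hw i) (hw j), div_mul_div_comm, ← mul_div_assoc,
      div_pow, mul_pow _ _ 2, mul_pow _ _ 2]
    refine div_le_div_of_nonneg_right ?_ (by positivity)
    calc _ = (1 - ‖a‖ ^ 2) ^ 2 * ((1 + ε) * ((1 - ‖w i‖ ^ 2) * (1 - ‖w j‖ ^ 2))) := by ring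
      _ ≤ _ := mul_le_mul_of_nonneg_left (hsep i j hij) (sq_nonneg _)

theorem exists_norm_lt_one_le_mul {E : Type*} [NormedAddCommGroup E] [InnerProductSpace ℂ E]
    {z : E} (hz : ‖z‖ < 1) {R : ℝ} (hR : 0 < R) :
    ∃ a : E, ‖a‖ < 1 ∧ ∀ w : E, ‖w‖ < 1 → ‖1 - inner ℂ z w‖ ≤ R →
      1 - ‖w‖ ^ 2 ≤ 4 * R * ((1 - ‖a‖ ^ 2) * (1 - ‖w‖ ^ 2) / ‖1 - inner ℂ a w‖ ^ 2) := by
  rcases le_total 1 R with h1 | h1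
  · refine ⟨0, by simp, fun w hw _ => ?_⟩
    have : 0 < 1 - ‖w‖ ^ 2 := by nlinarith [norm_nonneg w]
    simp
    nlinarith
  · have hna : ‖((1 - R : ℝ) : ℂ) • z‖ = (1 - R) * ‖z‖ := by
      rw [norm_smul, Complex.norm_real, Real.norm_of_nonneg (by linarith)]
    have hna' : ‖((1 - R : ℝ) : ℂ) • z‖ ≤ 1 - R := by
      rw [hna]; nlinarith [norm_nonneg z]
    have ha : ‖((1 - R : ℝ) : ℂ) • z‖ < 1 := by linarith
    refine ⟨((1 - R : ℝ) : ℂ) • z, ha, fun w hw hx => ?_⟩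
    have hA : 0 < 1 - ‖w‖ ^ 2 := by nlinarith [norm_nonneg w]
    have hD : R ≤ 1 - ‖((1 - R : ℝ) : ℂ) • z‖ ^ 2 := by
      nlinarith [norm_nonneg (((1 - R : ℝ) : ℂ) • z)]
    have hN0 := norm_pos_iff.2 (one_sub_inner_ne_zero ha hw)
    have hN : ‖1 - inner ℂ (((1 - R : ℝ) : ℂ) • z) w‖ ≤ 2 * R := by
      have : 1 - inner ℂ (((1 - R : ℝ) : ℂ) • z) w = (1 - inner ℂ z w) + (R : ℂ) * inner ℂ z w := by
        rw [inner_smul_left, Complex.conj_ofReal]; push_cast; ring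
      rw [this]
      refine (norm_add_le _ _).trans ?_
      rw [norm_mul, Complex.norm_real, Real.norm_of_nonneg hR.le]
      have : ‖inner ℂ z w‖ ≤ 1 :=
        (norm_inner_le_norm z w).trans (by nlinarith [norm_nonneg z, norm_nonneg w])
      nlinarith
    rw [← mul_div_assoc, le_div_iff₀ (by positivity)]
    calc (1 - ‖w‖ ^ 2) * ‖1 - inner ℂ (((1 - R : ℝ) : ℂ) • z) w‖ ^ 2
        ≤ (1 - ‖w‖ ^ 2) * (2 * R) ^ 2 := by gcongr
      _ = 4 * R * (R * (1 - ‖w‖ ^ 2)) := by ring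
      _ ≤ _ := by gcongr

theorem exists_sum_rpow_div_rpow_le {ι : Type*} (E : Type*) [NormedAddCommGroup E]
    [InnerProductSpace ℂ E] [FiniteDimensional ℂ E] [Nontrivial E] {ε t s : ℝ} (hε : 0 < ε)
    (ht : (Module.finrank ℂ E : ℝ) < t) (hts : t < s) :
    ∃ C : ℝ, 0 ≤ C ∧ ∀ (F : Finset ι) (w : ι → E), (∀ i, ‖w i‖ < 1) →
      (∀ i j, i ≠ j →
        (1 + ε) * ((1 - ‖w i‖ ^ 2) * (1 - ‖w j‖ ^ 2)) ≤ ‖1 - inner ℂ (w i) (w j)‖ ^ 2) →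
      ∀ z : E, ‖z‖ < 1 →
      ∑ i ∈ F, (1 - ‖w i‖ ^ 2) ^ t / ‖1 - inner ℂ z (w i)‖ ^ s ≤
        C * (1 - ‖z‖ ^ 2) ^ (t - s) := by
  obtain ⟨C, hC, hsum⟩ := exists_sum_ballInvolution_rpow_le (ι := ι) E hε ht
  have ht0 : 0 < t := lt_of_le_of_lt (Nat.cast_nonneg _) ht
  have hs0 : 0 < s := ht0.trans hts
  have hq1 : (2 : ℝ) ^ (t - s) < 1 :=
    Real.rpow_lt_one_of_one_lt_of_neg (by norm_num) (by linarith)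
  refine ⟨4 ^ t * 2 ^ s * C * (1 - (2 : ℝ) ^ (t - s))⁻¹,
    mul_nonneg (by positivity) (inv_nonneg.2 (by linarith)), fun F w hw hsep z hz => ?_⟩
  have hD : 0 < 1 - ‖z‖ ^ 2 := by nlinarith [norm_nonneg z]
  have hA : ∀ i, 0 < 1 - ‖w i‖ ^ 2 := fun i => by nlinarith [hw i, norm_nonneg (w i)]
  have hx : ∀ i, 1 ≤ ‖1 - inner ℂ z (w i)‖ / ((1 - ‖z‖ ^ 2) / 2) := fun i => by
    rw [le_div_iff₀ (by positivity), one_mul]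
    have h1 := norm_sub_norm_le (1 : ℂ) (inner ℂ z (w i))
    have h2 := norm_inner_le_norm (𝕜 := ℂ) z (w i)
    rw [norm_one] at h1
    nlinarith [hw i, norm_nonneg z, norm_nonneg (w i)]
  choose j hj1 hj2 using fun i => exists_nat_pow_near (hx i) (one_lt_two)
  rw [mul_right_comm]
  refine sum_le_of_fiber_le_geometric F _ j (by positivity) (by positivity) hq1 fun l => ?_
  set D := 1 - ‖z‖ ^ 2
  have hR : 0 < 2 ^ l * D := by positivity
  obtain ⟨a, ha, hle⟩ := exists_norm_lt_one_le_mul hz hR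
  calc ∑ i ∈ F with j i = l, (1 - ‖w i‖ ^ 2) ^ t / ‖1 - inner ℂ z (w i)‖ ^ s
      ≤ ∑ i ∈ F with j i = l, (4 * (2 ^ l * D)) ^ t / (2 ^ l * D / 2) ^ s *
          ((1 - ‖a‖ ^ 2) * (1 - ‖w i‖ ^ 2) / ‖1 - inner ℂ a (w i)‖ ^ 2) ^ t := by
        refine Finset.sum_le_sum fun i hi => ?_
        have hl := (Finset.mem_filter.1 hi).2
        have h1 := hj1 i
        have h2 := hj2 i
        rw [hl, le_div_iff₀ (by positivity)] at h1
        rw [hl, div_lt_iff₀ (by positivity), pow_succ] at h2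
        have h3 := hle (w i) (hw i) (by linarith)
        have hm : 0 ≤ (1 - ‖a‖ ^ 2) * (1 - ‖w i‖ ^ 2) / ‖1 - inner ℂ a (w i)‖ ^ 2 := by
          have : 0 < 1 - ‖a‖ ^ 2 := by nlinarith [norm_nonneg a]
          have := hA i
          positivity
        rw [div_mul_eq_mul_div, ← Real.mul_rpow (by positivity) hm]
        have := (hA i).le
        have h4 : 2 ^ l * D / 2 ≤ ‖1 - inner ℂ z (w i)‖ := by linarith
        gcongr
    _ ≤ (4 * (2 ^ l * D)) ^ t / (2 ^ l * D / 2) ^ s * C := by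
        rw [← Finset.mul_sum]
        gcongr
        exact hsum _ w hw hsep a ha
    _ = 4 ^ t * 2 ^ s * C * D ^ (t - s) * ((2 : ℝ) ^ (t - s)) ^ l := by
        rw [Real.rpow_pow_comm (by norm_num), Real.mul_rpow (by norm_num) hR.le,
          Real.div_rpow hR.le (by norm_num), mul_assoc _ (D ^ _), ← Real.mul_rpow hD.le
          (by positivity), mul_comm D, Real.rpow_sub hR]
        field_simp

theorem mob_pos {n : ℕ} {z w : Cn n} (hz : ‖z‖ < 1) (hw : ‖w‖ < 1)
    (h : 0 < ‖(1 : ℂ) - bdot w z‖) : 0 < mob z w := by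
  have h1 : 0 < 1 - ‖z‖ ^ 2 := by nlinarith [norm_nonneg z]
  have h2 : 0 < 1 - ‖w‖ ^ 2 := by nlinarith [norm_nonneg w]
  unfold mob
  positivity

theorem bdot_eq_inner {n : ℕ} (z w : Cn n) : bdot z w = inner ℂ w z := by
  simp [bdot, PiLp.inner_apply]

theorem exists_one_add_mul_mob_le {δ : ℝ} (hδ : 0 < δ) :
    ∃ ε : ℝ, 0 < ε ∧ ∀ (n : ℕ) (z w : Cn n), 0 < mob z w → δ < bergDist z w →
      (1 + ε) * mob z w ≤ 1 := by
  have hE : 1 < Real.exp (2 * δ) := Real.one_lt_exp_iff.2 (by linarith)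
  set τ := (Real.exp (2 * δ) - 1) / (Real.exp (2 * δ) + 1) with hτ
  have hτ0 : 0 < τ := div_pos (by linarith) (by linarith)
  have hτ1 : τ < 1 := by rw [hτ, div_lt_one (by linarith)]; linarith
  have hκ : 0 < 1 - τ ^ 2 := by nlinarith
  refine ⟨τ ^ 2 / (1 - τ ^ 2), by positivity, fun n z w hm hd => ?_⟩
  have hr0 : 0 ≤ rho z w := Real.sqrt_nonneg _
  have hr1 : rho z w < 1 := by
    rw [rho, Real.sqrt_lt' one_pos]; linarith
  have hlt : Real.exp (2 * δ) < (1 + rho z w) / (1 - rho z w) := by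
    rw [← Real.lt_log_iff_exp_lt (div_pos (by linarith) (by linarith))]
    unfold bergDist at hd
    linarith
  have hτr : τ < rho z w := by
    rw [lt_div_iff₀ (by linarith)] at hlt
    rw [hτ, div_lt_iff₀ (by linarith)]
    linarith
  have hsq : τ ^ 2 < 1 - mob z w := (Real.lt_sqrt hτ0.le).1 hτr
  have : 1 + τ ^ 2 / (1 - τ ^ 2) = 1 / (1 - τ ^ 2) := by field_simp; ring
  rw [this, one_div_mul_eq_div, div_le_one hκ]
  linarith

theorem stmt6 (n : ℕ) (zs : ℕ → Cn n) (hzs : ∀ k, zs k ∈ B n)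
    (δ : ℝ) (hδ : 0 < δ) (hsep : ∀ i j, i ≠ j → δ < bergDist (zs i) (zs j))
    (t s : ℝ) (hnt : (n : ℝ) < t) (hts : t < s) :
    ∃ C > 0, ∀ z ∈ B n,
      ∑' k : ℕ, (1 - ‖zs k‖ ^ 2) ^ t / ‖(1 : ℂ) - bdot z (zs k)‖ ^ s ≤
        C * (1 - ‖z‖ ^ 2) ^ (t - s) := by
  have hz : ∀ k, ‖zs k‖ < 1 := fun k => by simpa [B] using hzs k
  obtain ⟨ε, hε, hmob⟩ := exists_one_add_mul_mob_le hδ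
  have hpos : ∀ i j, 0 < ‖(1 : ℂ) - bdot (zs j) (zs i)‖ := fun i j => by
    rw [bdot_eq_inner]
    exact norm_pos_iff.2 (one_sub_inner_ne_zero (hz i) (hz j))
  have hsep' : ∀ i j, i ≠ j → (1 + ε) * ((1 - ‖zs i‖ ^ 2) * (1 - ‖zs j‖ ^ 2)) ≤
      ‖1 - inner ℂ (zs i) (zs j)‖ ^ 2 := fun i j hij => by
    have h := hmob n _ _ (mob_pos (hz i) (hz j) (hpos i j)) (hsep i j hij)
    have hp := hpos i j
    rw [mob, ← mul_div_assoc, div_le_one (by positivity)] at h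
    rwa [← bdot_eq_inner]
  have hne : zs 0 ≠ zs 1 := fun h => by
    have h1 := hsep' 0 1 zero_ne_one
    rw [← h, norm_one_sub_inner_sq, sub_self, norm_zero] at h1
    have h2 : (inner ℂ (zs 0) (zs 0)).im = 0 := inner_self_im (𝕜 := ℂ) _
    rw [h2] at h1
    have h3 : 0 < 1 - ‖zs 0‖ ^ 2 := by nlinarith [hz 0, norm_nonneg (zs 0)]
    nlinarith [mul_pos hε (pow_pos h3 2)]
  have : Nontrivial (Cn n) := ⟨⟨_, _, hne⟩⟩
  have hfin : ((Module.finrank ℂ (Cn n) : ℕ) : ℝ) < t := by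
    rwa [finrank_euclideanSpace_fin]
  obtain ⟨C, hC, hsum⟩ := exists_sum_rpow_div_rpow_le (ι := ℕ) (Cn n) hε hfin hts
  refine ⟨C + 1, by positivity, fun z hzB => ?_⟩
  have hz1 : ‖z‖ < 1 := by simpa [B] using hzB
  have hD : 0 < 1 - ‖z‖ ^ 2 := by nlinarith [norm_nonneg z]
  have hA : ∀ k, 0 < 1 - ‖zs k‖ ^ 2 := fun k => by nlinarith [hz k, norm_nonneg (zs k)]
  refine Real.tsum_le_of_sum_le (fun k => ?_) fun F => ?_
  · have := hA k
    simp only [Pi.zero_apply]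
    positivity
  · calc _ = ∑ k ∈ F, (1 - ‖zs k‖ ^ 2) ^ t / ‖1 - inner ℂ z (zs k)‖ ^ s := by
          refine Finset.sum_congr rfl fun k _ => ?_
          rw [bdot_eq_inner, ← RCLike.norm_conj, map_sub, map_one, inner_conj_symm]
      _ ≤ C * (1 - ‖z‖ ^ 2) ^ (t - s) := hsum F zs hz hsep' z hz1
      _ ≤ (C + 1) * (1 - ‖z‖ ^ 2) ^ (t - s) := by gcongr; linarith
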